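/- Let d ≥ 7 be an integer and set λ = (−d + 6 + √(d² + 4d − 28))/2 (so that 3 ≤ λ < 4). Let ũ, h̃ ∈ C²((0,r₀)) solve the system ũ″ + ((d−5)/r)ũ′ + (2(d−4)/r²)(ũh̃ − ũ) − r²ũ = 0 and h̃″ + ((d−5)/r)h̃′ + (2(d−4)/r²)(ũ² − h̃) = 0 on (0,r₀), and suppose ũ(r) → 1 and h̃(r) → 1 as r → 0⁺. Then there exist a constant c ∈ ℝ and constants C, r₁ > 0 such that |ũ(r) − 1 + c·r^λ| ≤ C·r⁴ and |h̃(r) − 1 − 2c·r^λ| ≤ C·r⁴ for all 0 < r < r₁. -/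

import Mathlib

open Set Filter Topology

/-! In the variable `t = log r` the system becomes autonomous up to the forcing `exp (4 t) u`, with
friction `k = d - 6`. Its linearization at `(1, 1)` splits: `p = 2 (u - 1) + (h - 1)` is a damped
oscillator, while `q = u - h` has the characteristic exponents `lam` and `-(lam + k)`. So there is
exactly one direction which grows from `-∞`, with coordinate `A = q' + (lam + k) q`, and the energy
`E` of the complementary, damped directions satisfies `E' ≤ -κ E + forcing`. The forcing is
`O(exp (4 t))` plus terms quadratic in `(p, q)`. Since everything tends to `0` at `-∞`, a cone
argument gives `E ≤ A ^ 2 + O(exp (8 t))`; then `A ^ 2 = O(exp (4 t))`, because `2 < lam`, and the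
quadratic terms are `O(exp (4 t))` as well. Integrating `A' = lam A + O(exp (4 t))` with `lam < 4`
gives `A = a exp (lam t) + O(exp (4 t))`, and `p = O(exp (4 t))` together with
`q = -3 c exp (lam t) + O(exp (4 t))` turns into the ratio `1 : -2` of the leading terms. -/

open Asymptotics
open Real (exp exp_pos)

section AtBot

variable {f f' : ℝ → ℝ} {c γ : ℝ}

lemma hasDerivAt_exp_const_mul (c t : ℝ) :
    HasDerivAt (fun s ↦ exp (c * s)) (c * exp (c * t)) t := by
  simpa [mul_comm] using ((hasDerivAt_id t).const_mul c).exp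

lemma tendsto_exp_const_mul_atBot (hc : 0 < c) :
    Tendsto (fun t ↦ exp (c * t)) atBot (𝓝 0) :=
  Real.tendsto_exp_atBot.comp (tendsto_id.const_mul_atBot hc)

lemma isBigO_exp_const_mul_atBot {a b : ℝ} (hab : a ≤ b) :
    (fun t ↦ exp (b * t)) =O[atBot] fun t ↦ exp (a * t) := by
  refine .of_bound' ?_
  filter_upwards [eventually_le_atBot 0] with t ht
  rw [Real.norm_of_nonneg (exp_pos _).le, Real.norm_of_nonneg (exp_pos _).le, Real.exp_le_exp]
  exact mul_le_mul_of_nonpos_right hab ht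

lemma isBigO_exp_const_mul_of_sq_isBigO {l : Filter ℝ}
    (h : (fun t ↦ f t ^ 2) =O[l] fun t ↦ exp (2 * c * t)) :
    f =O[l] fun t ↦ exp (c * t) := by
  refine .of_pow two_ne_zero (h.congr_right fun t ↦ ?_)
  rw [Pi.pow_apply, ← Real.exp_nat_mul]
  ring_nf

lemma exists_monotoneOn_mul_exp (hf : ∀ᶠ t in atBot, HasDerivAt f (f' t) t)
    (h : ∀ᶠ t in atBot, 0 ≤ f' t + c * f t) :
    ∃ T, MonotoneOn (fun t ↦ f t * exp (c * t)) (Iic T) := by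
  obtain ⟨T, hT⟩ := eventually_atBot.1 (hf.and h)
  have hderiv : ∀ t ≤ T, HasDerivAt (fun s ↦ f s * exp (c * s))
      ((f' t + c * f t) * exp (c * t)) t := fun t ht ↦
    ((hT t ht).1.fun_mul (hasDerivAt_exp_const_mul c t)).congr_deriv (by ring)
  refine ⟨T, monotoneOn_of_deriv_nonneg (convex_Iic T)
    (fun t ht ↦ (hderiv t ht).continuousAt.continuousWithinAt) ?_ ?_⟩
  · exact fun t ht ↦
      (hderiv t (mem_Iic.1 (interior_subset ht))).differentiableAt.differentiableWithinAt
  · intro t ht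
    have htT : t ≤ T := mem_Iic.1 (interior_subset ht)
    rw [(hderiv t htT).deriv]
    exact mul_nonneg (hT t htT).2 (exp_pos _).le

lemma eventually_nonneg_of_deriv_add_mul_nonneg (hc : 0 ≤ c)
    (hf : ∀ᶠ t in atBot, HasDerivAt f (f' t) t) (h : ∀ᶠ t in atBot, 0 ≤ f' t + c * f t)
    (hlim : Tendsto f atBot (𝓝 0)) : ∀ᶠ t in atBot, 0 ≤ f t := by
  obtain ⟨T, hT⟩ := exists_monotoneOn_mul_exp hf h
  have hexp : (fun t ↦ f t * exp (c * t)) =O[atBot] f := by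
    simpa using (isBigO_refl f atBot).mul (isBigO_exp_const_mul_atBot hc)
  filter_upwards [eventually_le_atBot T] with t ht
  refine nonneg_of_mul_nonneg_left (le_of_tendsto (hexp.trans_tendsto hlim) ?_) (exp_pos (c * t))
  filter_upwards [eventually_le_atBot t] with s hs
  exact hT (hs.trans ht) ht hs

lemma isBigO_exp_of_mul_le_deriv (hf : ∀ᶠ t in atBot, HasDerivAt f (f' t) t)
    (h : ∀ᶠ t in atBot, γ * f t ≤ f' t) (hf0 : ∀ t, 0 ≤ f t) :
    f =O[atBot] fun t ↦ exp (γ * t) := by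
  obtain ⟨T, hT⟩ := exists_monotoneOn_mul_exp (c := -γ) hf
    (h.mono fun t ht ↦ by linarith)
  refine .of_bound (f T * exp (-γ * T)) ?_
  filter_upwards [eventually_le_atBot T] with t ht
  rw [Real.norm_of_nonneg (hf0 t), Real.norm_of_nonneg (exp_pos _).le]
  calc f t = f t * exp (-γ * t) * exp (γ * t) := by
        rw [mul_assoc, ← Real.exp_add, neg_mul, neg_add_cancel, Real.exp_zero, mul_one]
    _ ≤ f T * exp (-γ * T) * exp (γ * t) :=
        mul_le_mul_of_nonneg_right (hT ht (mem_Iic.2 le_rfl) ht) (exp_pos _).le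

lemma isBigO_exp_of_deriv_le_neg_mul_add {g : ℝ → ℝ} {κ b : ℝ} (hκ : 0 ≤ κ) (hb : 0 < b)
    (hf : ∀ᶠ t in atBot, HasDerivAt f (f' t) t) (hf0 : ∀ t, 0 ≤ f t)
    (h : ∀ᶠ t in atBot, f' t ≤ -κ * f t + g t) (hg : g =O[atBot] fun t ↦ exp (b * t))
    (hlim : Tendsto f atBot (𝓝 0)) : f =O[atBot] fun t ↦ exp (b * t) := by
  obtain ⟨M, hM⟩ := hg.bound
  have hgap : ∀ᶠ t in atBot, 0 ≤ M / (b + κ) * exp (b * t) - f t := by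
    refine eventually_nonneg_of_deriv_add_mul_nonneg hκ (hf.mono fun t ht ↦
      ((hasDerivAt_exp_const_mul b t).const_mul (M / (b + κ))).sub ht) ?_ ?_
    · filter_upwards [h, hM] with t ht hMt
      rw [Real.norm_of_nonneg (exp_pos _).le] at hMt
      have hcancel : M / (b + κ) * (b + κ) = M := div_mul_cancel₀ _ (by positivity)
      linear_combination ht + (le_abs_self (g t)).trans hMt + (-exp (b * t)) * hcancel
    · simpa using ((tendsto_exp_const_mul_atBot hb).const_mul (M / (b + κ))).sub hlim
  refine .of_bound (M / (b + κ)) (hgap.mono fun t ht ↦ ?_)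
  rw [Real.norm_of_nonneg (hf0 t), Real.norm_of_nonneg (exp_pos _).le]
  linarith

lemma tendsto_atBot_atBot_of_le_deriv {ε : ℝ} (hε : 0 < ε)
    (hf : ∀ᶠ t in atBot, HasDerivAt f (f' t) t) (h : ∀ᶠ t in atBot, ε ≤ f' t) :
    Tendsto f atBot atBot := by
  obtain ⟨T, hT⟩ := exists_monotoneOn_mul_exp (c := 0)
    (hf.mono fun t ht ↦ ht.sub ((hasDerivAt_id t).const_mul ε))
    (h.mono fun t ht ↦ by linarith)
  refine tendsto_atBot_mono' atBot (f₁ := fun t ↦ f T - ε * T + ε * t) ?_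
    (tendsto_atBot_add_const_left _ _ (tendsto_id.const_mul_atBot hε))
  filter_upwards [eventually_le_atBot T] with t ht
  have hmono := hT ht (mem_Iic.2 le_rfl) ht
  simp only [Pi.sub_apply, id, zero_mul, Real.exp_zero, mul_one] at hmono
  linarith

section Damping

variable {f'' : ℝ → ℝ} {k l : ℝ}

lemma eventually_deriv_le_of_damped {ε : ℝ} (hε : 0 < ε)
    (hf : ∀ᶠ t in atBot, HasDerivAt f (f' t) t) (hf' : ∀ᶠ t in atBot, HasDerivAt f' (f'' t) t)
    (h : ∀ᶠ t in atBot, f'' t + k * f' t ≤ k * ε) (hlim : Tendsto f atBot (𝓝 l)) :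
    ∀ᶠ t in atBot, f' t ≤ ε := by
  obtain ⟨T, hT⟩ := exists_monotoneOn_mul_exp (c := k) (hf'.mono fun t ht ↦ ht.const_sub ε)
    (h.mono fun t ht ↦ by linarith)
  filter_upwards [eventually_le_atBot T] with t ht
  by_contra! hlt
  refine not_tendsto_nhds_of_tendsto_atBot (tendsto_atBot_atBot_of_le_deriv hε hf ?_) l hlim
  filter_upwards [eventually_le_atBot t] with s hs
  have hneg : (ε - f' s) * exp (k * s) < 0 :=
    (hT (hs.trans ht) ht hs).trans_lt (mul_neg_of_neg_of_pos (sub_neg.2 hlt) (exp_pos _))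
  exact (sub_neg.1 (neg_of_mul_neg_left hneg (exp_pos _).le)).le

lemma tendsto_deriv_zero_of_damped (hk : 0 < k)
    (hf : ∀ᶠ t in atBot, HasDerivAt f (f' t) t) (hf' : ∀ᶠ t in atBot, HasDerivAt f' (f'' t) t)
    (h : Tendsto (fun t ↦ f'' t + k * f' t) atBot (𝓝 0)) (hlim : Tendsto f atBot (𝓝 l)) :
    Tendsto f' atBot (𝓝 0) := by
  refine tendsto_order.2 ⟨fun a ha ↦ ?_, fun a ha ↦ ?_⟩
  · have hle := eventually_deriv_le_of_damped (ε := -a / 2) (k := k) (by linarith)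
      (hf.mono fun t ht ↦ ht.neg) (hf'.mono fun t ht ↦ ht.neg)
      ((h.eventually_const_lt (u := k * (a / 2)) (by nlinarith)).mono fun t ht ↦ by
        linarith) hlim.neg
    filter_upwards [hle] with t ht
    linarith
  · have hle := eventually_deriv_le_of_damped (half_pos ha) hf hf'
      ((h.eventually_lt_const (by positivity)).mono fun t ht ↦ ht.le) hlim
    exact hle.mono fun t ht ↦ ht.trans_lt (half_lt_self ha)

end Damping

section Normed

variable {E : Type*} [NormedAddCommGroup E] [NormedSpace ℝ E] {f f' : ℝ → E} {g g' : ℝ → ℝ}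

lemma norm_sub_le_sub_of_norm_deriv_le {s t : ℝ} (hst : s ≤ t)
    (hf : ∀ x ∈ Icc s t, HasDerivAt f (f' x) x) (hg : ∀ x ∈ Icc s t, HasDerivAt g (g' x) x)
    (h : ∀ x ∈ Icc s t, ‖f' x‖ ≤ g' x) : ‖f t - f s‖ ≤ g t - g s := by
  refine image_norm_le_of_norm_deriv_right_le_deriv_boundary' (f := fun x ↦ f x - f s)
    (B := fun x ↦ g x - g s) (f' := f') (B' := g') ?_ ?_ (by simp) ?_ ?_ ?_ (right_mem_Icc.2 hst)
  · exact fun x hx ↦ ((hf x hx).sub_const _).continuousAt.continuousWithinAt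
  · exact fun x hx ↦ ((hf x (Ico_subset_Icc_self hx)).sub_const _).hasDerivWithinAt
  · exact fun x hx ↦ ((hg x hx).sub_const _).continuousAt.continuousWithinAt
  · exact fun x hx ↦ ((hg x (Ico_subset_Icc_self hx)).sub_const _).hasDerivWithinAt
  · exact fun x hx ↦ h x (Ico_subset_Icc_self hx)

lemma exists_eventually_norm_sub_le_of_norm_deriv_le [CompleteSpace E]
    (hf : ∀ᶠ t in atBot, HasDerivAt f (f' t) t) (hg : ∀ᶠ t in atBot, HasDerivAt g (g' t) t)
    (h : ∀ᶠ t in atBot, ‖f' t‖ ≤ g' t) (hlim : Tendsto g atBot (𝓝 0)) :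
    ∃ a, ∀ᶠ t in atBot, ‖f t - a‖ ≤ g t := by
  obtain ⟨T, hT⟩ := eventually_atBot.1 (hf.and (hg.and h))
  have hincr : ∀ s t, s ≤ t → t ≤ T → ‖f t - f s‖ ≤ g t - g s := fun s t hst htT ↦
    have hle : ∀ x ∈ Icc s t, x ≤ T := fun x hx ↦ hx.2.trans htT
    norm_sub_le_sub_of_norm_deriv_le hst (fun x hx ↦ (hT x (hle x hx)).1)
      (fun x hx ↦ (hT x (hle x hx)).2.1) fun x hx ↦ (hT x (hle x hx)).2.2
  have hdist : ∀ s ≤ T, ∀ t ≤ T, dist (f s) (f t) ≤ |g s - g t| := fun s hs t ht ↦ by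
    rcases le_total s t with hst | hts
    · rw [dist_comm, dist_eq_norm, abs_sub_comm]
      exact (hincr s t hst ht).trans (le_abs_self _)
    · rw [dist_eq_norm]
      exact (hincr t s hts hs).trans (le_abs_self _)
  have hcauchy : Cauchy (map f atBot) := by
    refine cauchy_map_iff.2 ⟨inferInstance, tendsto_uniformity_iff_dist_tendsto_zero.2 ?_⟩
    refine squeeze_zero' (.of_forall fun _ ↦ dist_nonneg) (g := fun x ↦ |g x.1 - g x.2|) ?_ ?_
    · filter_upwards [(eventually_le_atBot T).prod_mk (eventually_le_atBot T)] with x hx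
      exact hdist _ hx.1 _ hx.2
    · simpa using ((hlim.comp tendsto_fst).sub (hlim.comp tendsto_snd)).abs
  obtain ⟨a, ha⟩ := CompleteSpace.complete hcauchy
  refine ⟨a, ?_⟩
  filter_upwards [eventually_le_atBot T] with t ht
  refine le_of_tendsto_of_tendsto (tendsto_const_nhds.sub ha).norm
    (by simpa using tendsto_const_nhds.sub hlim) ?_
  filter_upwards [eventually_le_atBot t] with s hs
  exact hincr s t hs ht

end Normed

lemma exists_sub_mul_exp_isBigO {A F : ℝ → ℝ} {lam β : ℝ} (hlam : lam < β)
    (hA : ∀ᶠ t in atBot, HasDerivAt A (lam * A t + F t) t)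
    (hF : F =O[atBot] fun t ↦ exp (β * t)) :
    ∃ a, (fun t ↦ A t - a * exp (lam * t)) =O[atBot] fun t ↦ exp (β * t) := by
  obtain ⟨M, hM⟩ := hF.bound
  have hgap : 0 < β - lam := sub_pos.2 hlam
  have hexp : ∀ t, exp (β * t) * exp (-lam * t) = exp ((β - lam) * t) := fun t ↦ by
    rw [← Real.exp_add]; ring_nf
  have hinv : ∀ t, exp (-lam * t) * exp (lam * t) = 1 := fun t ↦ by
    rw [← Real.exp_add, neg_mul, neg_add_cancel, Real.exp_zero]
  have hbound : ∀ᶠ t in atBot, ‖F t * exp (-lam * t)‖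
      ≤ M / (β - lam) * ((β - lam) * exp ((β - lam) * t)) := by
    filter_upwards [hM] with t ht
    rw [Real.norm_of_nonneg (exp_pos _).le] at ht
    rw [norm_mul, Real.norm_of_nonneg (exp_pos (-lam * t)).le, ← mul_assoc,
      div_mul_cancel₀ _ hgap.ne', ← hexp, ← mul_assoc]
    exact mul_le_mul_of_nonneg_right ht (exp_pos _).le
  obtain ⟨a, ha⟩ := exists_eventually_norm_sub_le_of_norm_deriv_le
    (hA.mono fun t ht ↦
      (ht.fun_mul (hasDerivAt_exp_const_mul (-lam) t)).congr_deriv (by ring))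
    (.of_forall fun t ↦ (hasDerivAt_exp_const_mul (β - lam) t).const_mul _) hbound
    (by simpa using (tendsto_exp_const_mul_atBot hgap).const_mul (M / (β - lam)))
  refine ⟨a, .of_bound (M / (β - lam)) (ha.mono fun t ht ↦ ?_)⟩
  rw [← hexp, ← mul_assoc] at ht
  calc ‖A t - a * exp (lam * t)‖ = ‖A t * exp (-lam * t) - a‖ * exp (lam * t) := by
        rw [← Real.norm_of_nonneg (exp_pos (lam * t)).le, ← norm_mul,
          Real.norm_of_nonneg (exp_pos (lam * t)).le]
        congr 1
        linear_combination -A t * hinv t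
    _ ≤ M / (β - lam) * exp (β * t) * exp (-lam * t) * exp (lam * t) :=
        mul_le_mul_of_nonneg_right ht (exp_pos _).le
    _ = M / (β - lam) * ‖exp (β * t)‖ := by
        rw [mul_assoc _ (exp (-lam * t)), hinv, mul_one, Real.norm_of_nonneg (exp_pos _).le]

end AtBot

section Saddle

variable {A F E E' Φ : ℝ → ℝ} {lam κ β : ℝ}

lemma eventually_le_mul_exp_add_mul_of_isBigO_sq {ρ : ℝ → ℝ} (hρ0 : ∀ t, 0 ≤ ρ t)
    (hρ : Tendsto ρ atBot (𝓝 0)) (hΦ : Φ =O[atBot] fun t ↦ (exp (β * t) + ρ t) ^ 2)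
    {ε : ℝ} (hε : 0 < ε) :
    ∃ M, ∀ᶠ t in atBot, Φ t ≤ M * exp (2 * β * t) + ε * ρ t := by
  obtain ⟨M, hM0, hM⟩ := hΦ.exists_pos
  have hsmall : ∀ᶠ t in atBot, ρ t < ε / (2 * M) := hρ.eventually_lt_const (by positivity)
  refine ⟨2 * M, ?_⟩
  filter_upwards [hM.bound, hsmall] with t ht hsm
  have hsq : exp (β * t) ^ 2 = exp (2 * β * t) := by
    rw [← Real.exp_nat_mul, Nat.cast_ofNat, mul_assoc]
  calc Φ t ≤ M * (exp (β * t) + ρ t) ^ 2 := by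
        simpa using (le_abs_self _).trans ht
    _ ≤ M * (2 * (exp (β * t) ^ 2 + ρ t ^ 2)) := by gcongr; exact add_sq_le
    _ = 2 * M * exp (2 * β * t) + 2 * M * ρ t * ρ t := by rw [hsq]; ring
    _ ≤ 2 * M * exp (2 * β * t) + ε * ρ t := by
        gcongr
        · exact hρ0 t
        · rw [mul_comm]
          exact ((lt_div_iff₀ (by positivity)).1 hsm).le

lemma neg_mul_sq_sub_sq_div_le_two_mul {μ : ℝ} (hμ : 0 < μ) (x y : ℝ) :
    -(μ * x ^ 2) - y ^ 2 / μ ≤ 2 * x * y := by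
  have hsq : 0 ≤ (μ * x + y) ^ 2 / μ := by positivity
  have hexpand : (μ * x + y) ^ 2 / μ = μ * x ^ 2 + 2 * x * y + y ^ 2 / μ := by field_simp; ring
  linarith

-- The gap `A ^ 2 + D * exp (b * t) - E` is nondecreasing: `A ^ 2` grows, `E` is damped, and the
-- exponential pays for the forcing.
lemma exists_eventually_energy_le (hlam : 0 < lam) (hκ : 0 < κ) {b : ℝ} (hb : 0 < b)
    (hA : ∀ᶠ t in atBot, HasDerivAt A (lam * A t + F t) t)
    (hE : ∀ᶠ t in atBot, HasDerivAt E (E' t) t) (hE0 : ∀ t, 0 ≤ E t)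
    (hF : ∀ᶠ t in atBot, F t ^ 2 ≤ Φ t) (hE' : ∀ᶠ t in atBot, E' t ≤ -κ * E t + Φ t)
    (hΦ : ∀ ε > 0, ∃ M, ∀ᶠ t in atBot, Φ t ≤ M * exp (b * t) + ε * (A t ^ 2 + E t))
    (hAlim : Tendsto A atBot (𝓝 0)) (hElim : Tendsto E atBot (𝓝 0)) :
    ∃ D, ∀ᶠ t in atBot, E t ≤ A t ^ 2 + D * exp (b * t) := by
  set K := 1 + 1 / lam
  have hK : 0 < K := by positivity
  set ε := min lam κ / K
  have hKε : K * ε = min lam κ := mul_div_cancel₀ _ hK.ne'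
  obtain ⟨M, hM⟩ := hΦ ε (div_pos (lt_min hlam hκ) hK)
  have hgap : ∀ᶠ t in atBot, 0 ≤ A t ^ 2 + K * M / b * exp (b * t) - E t := by
    refine eventually_nonneg_of_deriv_add_mul_nonneg (c := 0) le_rfl
      (f' := fun t ↦ 2 * A t * (lam * A t + F t) + K * M * exp (b * t) - E' t) ?_ ?_ ?_
    · filter_upwards [hA, hE] with t hAt hEt
      refine (((hAt.fun_pow 2).fun_add
        ((hasDerivAt_exp_const_mul b t).const_mul (K * M / b))).fun_sub hEt).congr_deriv ?_
      field_simp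
      ring
    · filter_upwards [hF, hE', hM] with t hFt hEt hMt
      have hAF := neg_mul_sq_sub_sq_div_le_two_mul hlam (A t) (F t)
      have hFΦ : F t ^ 2 / lam ≤ Φ t / lam := by gcongr
      have hKΦ : K * Φ t ≤ K * M * exp (b * t) + lam * A t ^ 2 + κ * E t := calc
        K * Φ t ≤ K * (M * exp (b * t) + ε * (A t ^ 2 + E t)) := by gcongr
        _ = K * M * exp (b * t) + (min lam κ * A t ^ 2 + min lam κ * E t) := by
          rw [← hKε]; ring
        _ ≤ K * M * exp (b * t) + (lam * A t ^ 2 + κ * E t) := by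
          have := hE0 t
          gcongr
          · exact min_le_left _ _
          · exact min_le_right _ _
        _ = K * M * exp (b * t) + lam * A t ^ 2 + κ * E t := by ring
      have hK1 : K * Φ t = Φ t + Φ t / lam := by ring
      linarith
    · simpa using ((hAlim.pow 2).add ((tendsto_exp_const_mul_atBot hb).const_mul
        (K * M / b))).sub hElim
  exact ⟨K * M / b, hgap.mono fun t ht ↦ by linarith⟩

lemma sq_isBigO_exp_of_unstable {Ψ : ℝ → ℝ} {γ b : ℝ} (hγ : γ < lam) (hγb : 2 * γ < b)
    (hA : ∀ᶠ t in atBot, HasDerivAt A (lam * A t + F t) t)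
    (hF : ∀ᶠ t in atBot, F t ^ 2 ≤ Ψ t + (lam - γ) ^ 2 * A t ^ 2)
    (hΨ : Ψ =O[atBot] fun t ↦ exp (b * t)) :
    (fun t ↦ A t ^ 2) =O[atBot] fun t ↦ exp (2 * γ * t) := by
  obtain ⟨N, hN0, hN⟩ := hΨ.exists_pos
  have hlamγ : 0 < lam - γ := sub_pos.2 hγ
  have hbγ : 0 < b - 2 * γ := sub_pos.2 hγb
  set D := N / ((b - 2 * γ) * (lam - γ))
  have hD : (b - 2 * γ) * D = N / (lam - γ) := by simp only [D]; field_simp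
  have hU : (fun t ↦ A t ^ 2 + D * exp (b * t)) =O[atBot] fun t ↦ exp (2 * γ * t) := by
    refine isBigO_exp_of_mul_le_deriv
      (f' := fun t ↦ 2 * A t * (lam * A t + F t) + D * (b * exp (b * t))) ?_ ?_
      fun t ↦ by positivity
    · filter_upwards [hA] with t ht
      exact ((ht.fun_pow 2).fun_add
        ((hasDerivAt_exp_const_mul b t).const_mul D)).congr_deriv (by simp)
    · filter_upwards [hF, hN.bound] with t hFt hNt
      rw [Real.norm_of_nonneg (exp_pos _).le] at hNt
      have hF' : F t ^ 2 / (lam - γ) ≤ N / (lam - γ) * exp (b * t) + (lam - γ) * A t ^ 2 := by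
        rw [div_le_iff₀ hlamγ]
        calc F t ^ 2 ≤ N * exp (b * t) + (lam - γ) ^ 2 * A t ^ 2 := by
              linarith [(le_abs_self (Ψ t)).trans hNt]
          _ = _ := by field_simp
      have hAF := neg_mul_sq_sub_sq_div_le_two_mul hlamγ (A t) (F t)
      rw [← hD] at hF'
      linarith
  refine .trans (.of_bound' (.of_forall fun t ↦ ?_)) hU
  rw [Real.norm_of_nonneg (sq_nonneg _), Real.norm_of_nonneg (by positivity)]
  exact le_add_of_nonneg_right (by positivity)

lemma sq_add_energy_isBigO_exp (hκ : 0 < κ) (hβ : 0 < β) (hβlam : β < 2 * lam)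
    (hA : ∀ᶠ t in atBot, HasDerivAt A (lam * A t + F t) t)
    (hE : ∀ᶠ t in atBot, HasDerivAt E (E' t) t) (hE0 : ∀ t, 0 ≤ E t)
    (hF : ∀ᶠ t in atBot, F t ^ 2 ≤ Φ t) (hE' : ∀ᶠ t in atBot, E' t ≤ -κ * E t + Φ t)
    (hΦ : Φ =O[atBot] fun t ↦ (exp (β * t) + (A t ^ 2 + E t)) ^ 2)
    (hAlim : Tendsto A atBot (𝓝 0)) (hElim : Tendsto E atBot (𝓝 0)) :
    (fun t ↦ A t ^ 2 + E t) =O[atBot] fun t ↦ exp (β * t) := by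
  have hforcing : ∀ ε > 0, ∃ M, ∀ᶠ t in atBot,
      Φ t ≤ M * exp (2 * β * t) + ε * (A t ^ 2 + E t) := fun ε hε ↦
    eventually_le_mul_exp_add_mul_of_isBigO_sq (fun t ↦ add_nonneg (sq_nonneg _) (hE0 t))
      (by simpa using (hAlim.pow 2).add hElim) hΦ hε
  obtain ⟨D, hD⟩ := exists_eventually_energy_le (by linarith) hκ (by positivity) hA hE hE0 hF hE'
    hforcing hAlim hElim
  have hgap : 0 < lam - β / 2 := by linarith
  set ε := (lam - β / 2) ^ 2 / 2 with hε
  obtain ⟨M, hM⟩ := hforcing ε (by positivity)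
  have hA2 : (fun t ↦ A t ^ 2) =O[atBot] fun t ↦ exp (2 * (β / 2) * t) := by
    refine sq_isBigO_exp_of_unstable (sub_pos.1 hgap) (by linarith) hA
      (Ψ := fun t ↦ (M + ε * D) * exp (2 * β * t)) ?_ ((isBigO_refl _ _).const_mul_left _)
    filter_upwards [hF, hM, hD] with t hFt hMt hDt
    have hεD : ε * E t ≤ ε * (A t ^ 2 + D * exp (2 * β * t)) := by gcongr
    rw [hε] at hεD hMt ⊢
    linarith
  rw [mul_div_cancel₀ β two_ne_zero] at hA2
  have hE2 : E =O[atBot] fun t ↦ exp (β * t) :=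
    .trans (.of_norm_eventuallyLE (hD.mono fun t ht ↦
      (Real.norm_of_nonneg (hE0 t)).trans_le ht)) (hA2.add
        ((isBigO_exp_const_mul_atBot (by linarith : β ≤ 2 * β)).const_mul_left D))
  exact hA2.add hE2

theorem exists_asymptotic_of_saddle (hκ : 0 < κ) (hlamβ : lam < β) (hβlam : β < 2 * lam)
    (hA : ∀ᶠ t in atBot, HasDerivAt A (lam * A t + F t) t)
    (hE : ∀ᶠ t in atBot, HasDerivAt E (E' t) t) (hE0 : ∀ t, 0 ≤ E t)
    (hF : ∀ᶠ t in atBot, F t ^ 2 ≤ Φ t) (hE' : ∀ᶠ t in atBot, E' t ≤ -κ * E t + Φ t)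
    (hΦ : Φ =O[atBot] fun t ↦ (exp (β * t) + (A t ^ 2 + E t)) ^ 2)
    (hAlim : Tendsto A atBot (𝓝 0)) (hElim : Tendsto E atBot (𝓝 0)) :
    (∃ a, (fun t ↦ A t - a * exp (lam * t)) =O[atBot] fun t ↦ exp (β * t)) ∧
      E =O[atBot] fun t ↦ exp (2 * β * t) := by
  have hβ : 0 < β := by linarith
  have hdecay := sq_add_energy_isBigO_exp hκ hβ hβlam hA hE hE0 hF hE' hΦ hAlim hElim
  have hΦexp : Φ =O[atBot] fun t ↦ exp (2 * β * t) :=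
    (hΦ.trans (((isBigO_refl _ _).add hdecay).pow 2)).congr_right fun t ↦ by
      rw [← Real.exp_nat_mul, Nat.cast_ofNat, mul_assoc]
  have hF2 : (fun t ↦ F t ^ 2) =O[atBot] fun t ↦ exp (2 * β * t) :=
    .trans (.of_norm_eventuallyLE (hF.mono fun t ht ↦
      (Real.norm_of_nonneg (sq_nonneg _)).trans_le ht)) hΦexp
  exact ⟨exists_sub_mul_exp_isBigO hlamβ hA (isBigO_exp_const_mul_of_sq_isBigO hF2),
    isBigO_exp_of_deriv_le_neg_mul_add hκ.le (by positivity) hE hE0 hE' hΦexp hElim⟩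

end Saddle

section DampedOscillator

/-- A Lyapunov function of the damped oscillator `p'' + k p' + m p = f`, as a function of the
position `p` and the velocity `P = p'`. The term `(P + k p) ^ 2 / 2` makes the dissipation control
`p` as well as `P`. -/
noncomputable def dampedEnergy (k m p P : ℝ) : ℝ :=
  P ^ 2 / 2 + (P + k * p) ^ 2 / 2 + m * p ^ 2

variable {k m : ℝ}

lemma mul_sq_le_dampedEnergy (k m p P : ℝ) : m * p ^ 2 ≤ dampedEnergy k m p P :=
  le_add_of_nonneg_left (by positivity)

lemma dampedEnergy_nonneg (hm : 0 ≤ m) (p P : ℝ) : 0 ≤ dampedEnergy k m p P :=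
  (mul_nonneg hm (sq_nonneg p)).trans (mul_sq_le_dampedEnergy k m p P)

lemma dampedEnergy_le (hm : 0 < m) (p P : ℝ) :
    dampedEnergy k m p P ≤ (2 + k ^ 2 / m) * (P ^ 2 + m * p ^ 2) := by
  have hcross : (P + k * p) ^ 2 ≤ 2 * (P ^ 2 + (k * p) ^ 2) := add_sq_le
  have hexpand : (2 + k ^ 2 / m) * (P ^ 2 + m * p ^ 2)
      = 2 * P ^ 2 + 2 * (m * p ^ 2) + (k * p) ^ 2 + k ^ 2 / m * P ^ 2 := by field_simp; ring
  have hP : 0 ≤ k ^ 2 / m * P ^ 2 := by positivity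
  have hp : 0 ≤ m * p ^ 2 := by positivity
  rw [hexpand, dampedEnergy]
  linarith [sq_nonneg P]

lemma hasDerivAt_dampedEnergy {p P : ℝ → ℝ} {f t : ℝ} (hp : HasDerivAt p (P t) t)
    (hP : HasDerivAt P (-k * P t - m * p t + f) t) :
    HasDerivAt (fun s ↦ dampedEnergy k m (p s) (P s))
      (-k * (P t ^ 2 + m * p t ^ 2) + (2 * P t + k * p t) * f) t := by
  refine ((((hP.fun_pow 2).div_const 2).fun_add
    (((hP.fun_add (hp.const_mul k)).fun_pow 2).div_const 2)).fun_add
      ((hp.fun_pow 2).const_mul m)).congr_deriv ?_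
  simp only [Nat.cast_ofNat]
  ring

lemma dissipation_add_work_le (hk : 0 < k) (hm : 0 < m) (p P f : ℝ) :
    -k * (P ^ 2 + m * p ^ 2) + (2 * P + k * p) * f
      ≤ -(k / 2 / (2 + k ^ 2 / m)) * dampedEnergy k m p P + (2 / k + k / (2 * m)) * f ^ 2 := by
  have hcoercive : k / 2 / (2 + k ^ 2 / m) * dampedEnergy k m p P
      ≤ k / 2 * (P ^ 2 + m * p ^ 2) := by
    rw [div_mul_eq_mul_div, div_le_iff₀ (by positivity), mul_assoc, mul_comm (_ + _)]
    gcongr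
    exact dampedEnergy_le hm p P
  have hyoung : k / 2 * (P ^ 2 + m * p ^ 2) - (2 * P + k * p) * f + (2 / k + k / (2 * m)) * f ^ 2
      = (k * P - 2 * f) ^ 2 / (2 * k) + k * (m * p - f) ^ 2 / (2 * m) := by
    field_simp
    ring
  have hsq : 0 ≤ (k * P - 2 * f) ^ 2 / (2 * k) + k * (m * p - f) ^ 2 / (2 * m) := by positivity
  linarith

end DampedOscillator

section Decoupled

variable {p P q Q f g : ℝ → ℝ} {k m lam β : ℝ}

lemma sq_add_sq_isBigO_unstable_sq_add_energy (hm : 0 < m) (hk : 0 < k) (hlam : 0 < lam) :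
    (fun t ↦ p t ^ 2 + q t ^ 2) =O[atBot] fun t ↦ (Q t + (lam + k) * q t) ^ 2
      + (dampedEnergy k m (p t) (P t) + (Q t - lam * q t) ^ 2) := by
  refine .of_bound (1 / m + 2 / (2 * lam + k) ^ 2) (.of_forall fun t ↦ ?_)
  have hp := mul_sq_le_dampedEnergy k m (p t) (P t)
  have hD := dampedEnergy_nonneg (k := k) hm.le (p t) (P t)
  rw [Real.norm_of_nonneg (by positivity), Real.norm_of_nonneg (by positivity)]
  generalize dampedEnergy k m (p t) (P t) = D at *
  set A := Q t + (lam + k) * q t with hA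
  set B := Q t - lam * q t with hB
  have hp' : p t ^ 2 ≤ 1 / m * (A ^ 2 + (D + B ^ 2)) := by
    rw [one_div_mul_eq_div, le_div_iff₀ hm]
    linarith [sq_nonneg A, sq_nonneg B]
  have hq' : q t ^ 2 ≤ 2 / (2 * lam + k) ^ 2 * (A ^ 2 + (D + B ^ 2)) := by
    rw [div_mul_eq_mul_div, le_div_iff₀ (by positivity)]
    calc q t ^ 2 * (2 * lam + k) ^ 2 = (A - B) ^ 2 := by rw [hA, hB]; ring
      _ ≤ 2 * (A ^ 2 + (D + B ^ 2)) := by linarith [sq_nonneg (A + B)]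
  linarith

lemma decoupled_energy_deriv_le {σ : ℝ} (hk : 0 < k) (hm : 0 < m) (hσ : 0 < σ)
    (p P B f g : ℝ) :
    -k * (P ^ 2 + m * p ^ 2) + (2 * P + k * p) * f + 2 * B * (-σ * B + g)
      ≤ -min (k / 2 / (2 + k ^ 2 / m)) σ * (dampedEnergy k m p P + B ^ 2)
        + ((2 / k + k / (2 * m)) * f ^ 2 + (1 / σ + 1) * g ^ 2) := by
  have hD := dissipation_add_work_le hk hm p P f
  have hBg := neg_mul_sq_sub_sq_div_le_two_mul hσ B (-g)
  have hD0 : min (k / 2 / (2 + k ^ 2 / m)) σ * dampedEnergy k m p P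
      ≤ k / 2 / (2 + k ^ 2 / m) * dampedEnergy k m p P :=
    mul_le_mul_of_nonneg_right (min_le_left _ _) (dampedEnergy_nonneg hm.le p P)
  have hB0 : min (k / 2 / (2 + k ^ 2 / m)) σ * B ^ 2 ≤ σ * B ^ 2 :=
    mul_le_mul_of_nonneg_right (min_le_right _ _) (sq_nonneg B)
  have hsplit : (1 / σ + 1) * g ^ 2 = (-g) ^ 2 / σ + g ^ 2 := by ring
  linarith [sq_nonneg g]

lemma tendsto_dampedEnergy (hp : Tendsto p atBot (𝓝 0)) (hP : Tendsto P atBot (𝓝 0)) :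
    Tendsto (fun t ↦ dampedEnergy k m (p t) (P t)) atBot (𝓝 0) := by
  simpa [dampedEnergy] using (((hP.pow 2).div_const 2).add
    (((hP.add (hp.const_mul k)).pow 2).div_const 2)).add ((hp.pow 2).const_mul m)

lemma exists_asymptotic_of_decoupled_of_tendsto (hk : 0 < k) (hm : 0 < m) (hlam : lam < β)
    (hβ : β < 2 * lam)
    (hp : ∀ᶠ t in atBot, HasDerivAt p (P t) t)
    (hP : ∀ᶠ t in atBot, HasDerivAt P (-k * P t - m * p t + f t) t)
    (hq : ∀ᶠ t in atBot, HasDerivAt q (Q t) t)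
    (hQ : ∀ᶠ t in atBot, HasDerivAt Q (-k * Q t + lam * (lam + k) * q t + g t) t)
    (hf : f =O[atBot] fun t ↦ exp (β * t) + (p t ^ 2 + q t ^ 2))
    (hg : g =O[atBot] fun t ↦ exp (β * t) + (p t ^ 2 + q t ^ 2))
    (hplim : Tendsto p atBot (𝓝 0)) (hPlim : Tendsto P atBot (𝓝 0))
    (hqlim : Tendsto q atBot (𝓝 0)) (hQlim : Tendsto Q atBot (𝓝 0)) :
    (∃ a, (fun t ↦ Q t + (lam + k) * q t - a * exp (lam * t)) =O[atBot] fun t ↦ exp (β * t)) ∧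
      (fun t ↦ dampedEnergy k m (p t) (P t) + (Q t - lam * q t) ^ 2)
        =O[atBot] fun t ↦ exp (2 * β * t) := by
  have hσ : 0 < lam + k := by linarith
  have hpq := (isBigO_refl (fun t ↦ exp (β * t)) atBot).add_add
    (sq_add_sq_isBigO_unstable_sq_add_energy (p := p) (P := P) (q := q) (Q := Q) hm hk
      (by linarith : 0 < lam))
  have hforcing {h : ℝ → ℝ} (hh : h =O[atBot] fun t ↦ exp (β * t) + (p t ^ 2 + q t ^ 2)) :
      (fun t ↦ h t ^ 2) =O[atBot] fun t ↦ (exp (β * t) + ((Q t + (lam + k) * q t) ^ 2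
        + (dampedEnergy k m (p t) (P t) + (Q t - lam * q t) ^ 2))) ^ 2 := by
    refine ((hh.trans hpq).pow 2).congr_right fun t ↦ ?_
    have hD := dampedEnergy_nonneg (k := k) hm.le (p t) (P t)
    rw [Real.norm_of_nonneg (exp_pos _).le, Real.norm_of_nonneg (by positivity)]
  refine exists_asymptotic_of_saddle (κ := min (k / 2 / (2 + k ^ 2 / m)) (lam + k)) (F := g)
    (Φ := fun t ↦ (2 / k + k / (2 * m)) * f t ^ 2 + (1 / (lam + k) + 1) * g t ^ 2)
    (lt_min (by positivity) hσ) hlam hβ ?_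
    (E' := fun t ↦ -k * (P t ^ 2 + m * p t ^ 2) + (2 * P t + k * p t) * f t
      + 2 * (Q t - lam * q t) * (-(lam + k) * (Q t - lam * q t) + g t))
    ?_ ?_ ?_ ?_ ?_ ?_ ?_
  · filter_upwards [hq, hQ] with t hqt hQt
    exact (hQt.fun_add (hqt.const_mul (lam + k))).congr_deriv (by ring)
  · filter_upwards [hp, hP, hq, hQ] with t hpt hPt hqt hQt
    refine ((hasDerivAt_dampedEnergy hpt hPt).fun_add
      ((hQt.fun_sub (hqt.const_mul lam)).fun_pow 2)).congr_deriv ?_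
    simp only [Nat.cast_ofNat]
    ring
  · exact fun t ↦ add_nonneg (dampedEnergy_nonneg hm.le _ _) (sq_nonneg _)
  · refine .of_forall fun t ↦ ?_
    have hf0 : 0 ≤ (2 / k + k / (2 * m)) * f t ^ 2 := by positivity
    have hg0 : 0 ≤ 1 / (lam + k) * g t ^ 2 := by positivity
    linarith
  · exact .of_forall fun t ↦ decoupled_energy_deriv_le hk hm hσ _ _ _ _ _
  · exact ((hforcing hf).const_mul_left _).add ((hforcing hg).const_mul_left _)
  · simpa using hQlim.add (hqlim.const_mul (lam + k))
  · simpa using (tendsto_dampedEnergy hplim hPlim).add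
      ((hQlim.sub (hqlim.const_mul lam)).pow 2)

theorem exists_asymptotic_of_decoupled (hk : 0 < k) (hm : 0 < m) (hlam : lam < β)
    (hβ : β < 2 * lam)
    (hp : ∀ᶠ t in atBot, HasDerivAt p (P t) t)
    (hP : ∀ᶠ t in atBot, HasDerivAt P (-k * P t - m * p t + f t) t)
    (hq : ∀ᶠ t in atBot, HasDerivAt q (Q t) t)
    (hQ : ∀ᶠ t in atBot, HasDerivAt Q (-k * Q t + lam * (lam + k) * q t + g t) t)
    (hf : f =O[atBot] fun t ↦ exp (β * t) + (p t ^ 2 + q t ^ 2))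
    (hg : g =O[atBot] fun t ↦ exp (β * t) + (p t ^ 2 + q t ^ 2))
    (hplim : Tendsto p atBot (𝓝 0)) (hqlim : Tendsto q atBot (𝓝 0)) :
    p =O[atBot] (fun t ↦ exp (β * t)) ∧
      ∃ a, (fun t ↦ q t - a * exp (lam * t)) =O[atBot] fun t ↦ exp (β * t) := by
  have hlam0 : 0 < lam := by linarith
  have hforcing : Tendsto (fun t ↦ exp (β * t) + (p t ^ 2 + q t ^ 2)) atBot (𝓝 0) := by
    simpa using (tendsto_exp_const_mul_atBot (by linarith : 0 < β)).add
      ((hplim.pow 2).add (hqlim.pow 2))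
  have hPlim : Tendsto P atBot (𝓝 0) := by
    refine tendsto_deriv_zero_of_damped hk hp hP ?_ hplim
    simpa using ((hplim.const_mul (-m)).add (hf.trans_tendsto hforcing)).congr fun t ↦ by ring
  have hQlim : Tendsto Q atBot (𝓝 0) := by
    refine tendsto_deriv_zero_of_damped hk hq hQ ?_ hqlim
    simpa using ((hqlim.const_mul (lam * (lam + k))).add
      (hg.trans_tendsto hforcing)).congr fun t ↦ by ring
  obtain ⟨⟨a, ha⟩, hE⟩ := exists_asymptotic_of_decoupled_of_tendsto hk hm hlam hβ hp hP hq hQ hf hg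
    hplim hPlim hqlim hQlim
  have hp2 : (fun t ↦ p t ^ 2) =O[atBot] fun t ↦ exp (2 * β * t) := by
    refine .trans (.of_bound (1 / m) (.of_forall fun t ↦ ?_)) hE
    have hpt := mul_sq_le_dampedEnergy k m (p t) (P t)
    have hD := dampedEnergy_nonneg (k := k) hm.le (p t) (P t)
    rw [Real.norm_of_nonneg (by positivity), Real.norm_of_nonneg (by positivity),
      one_div_mul_eq_div, le_div_iff₀ hm]
    linarith [sq_nonneg (Q t - lam * q t)]
  have hB2 : (fun t ↦ (Q t - lam * q t) ^ 2) =O[atBot] fun t ↦ exp (2 * β * t) := by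
    refine .trans (.of_bound' (.of_forall fun t ↦ ?_)) hE
    have hD := dampedEnergy_nonneg (k := k) hm.le (p t) (P t)
    rw [Real.norm_of_nonneg (by positivity), Real.norm_of_nonneg (by positivity)]
    exact le_add_of_nonneg_left hD
  refine ⟨isBigO_exp_const_mul_of_sq_isBigO hp2, a / (2 * lam + k), ?_⟩
  refine ((ha.sub (isBigO_exp_const_mul_of_sq_isBigO hB2)).const_mul_left
    (1 / (2 * lam + k))).congr_left fun t ↦ ?_
  field_simp
  ring

end Decoupled

section LogVariables

variable {u U h H p q : ℝ → ℝ} {k lam β : ℝ}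

lemma quadratic_isBigO_sq_add_sq (l : Filter ℝ) (p q : ℝ → ℝ) (a b c : ℝ) :
    (fun t ↦ a * p t ^ 2 + b * (p t * q t) + c * q t ^ 2) =O[l] fun t ↦ p t ^ 2 + q t ^ 2 := by
  have hp : (fun t ↦ p t ^ 2) =O[l] fun t ↦ p t ^ 2 + q t ^ 2 :=
    .of_norm_le fun t ↦ by rw [Real.norm_of_nonneg (sq_nonneg _)]; linarith [sq_nonneg (q t)]
  have hq : (fun t ↦ q t ^ 2) =O[l] fun t ↦ p t ^ 2 + q t ^ 2 :=
    .of_norm_le fun t ↦ by rw [Real.norm_of_nonneg (sq_nonneg _)]; linarith [sq_nonneg (p t)]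
  have hpq : (fun t ↦ p t * q t) =O[l] fun t ↦ p t ^ 2 + q t ^ 2 :=
    .of_norm_le fun t ↦ abs_le.2 ⟨by nlinarith [sq_nonneg (p t + q t)],
      by nlinarith [sq_nonneg (p t - q t)]⟩
  exact ((hp.const_mul_left a).add (hpq.const_mul_left b)).add (hq.const_mul_left c)

lemma forcing_isBigO_exp_add_sq (hu : u =O[atBot] fun _ ↦ (1 : ℝ)) (s a b c : ℝ) :
    (fun t ↦ s * (exp (β * t) * u t) + (a * p t ^ 2 + b * (p t * q t) + c * q t ^ 2))
      =O[atBot] fun t ↦ exp (β * t) + (p t ^ 2 + q t ^ 2) := by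
  have hexp : (fun t ↦ s * (exp (β * t) * u t)) =O[atBot] fun t ↦ exp (β * t) := by
    simpa using ((isBigO_refl (fun t ↦ exp (β * t)) atBot).mul hu).const_mul_left s
  refine (hexp.add_add (quadratic_isBigO_sq_add_sq atBot p q a b c)).congr_right fun t ↦ ?_
  rw [Real.norm_of_nonneg (exp_pos _).le, Real.norm_of_nonneg (by positivity)]

theorem exists_asymptotic_of_log_system (hk : 0 < k) (hlam : 0 < lam)
    (hchar : lam * (lam + k) = 4 * (k + 2))
    (hu : ∀ᶠ t in atBot, HasDerivAt u (U t) t) (hh : ∀ᶠ t in atBot, HasDerivAt h (H t) t)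
    (hU : ∀ᶠ t in atBot, HasDerivAt U
      (-k * U t - 2 * (k + 2) * (u t * h t - u t) + exp (4 * t) * u t) t)
    (hH : ∀ᶠ t in atBot, HasDerivAt H (-k * H t - 2 * (k + 2) * (u t ^ 2 - h t)) t)
    (hulim : Tendsto u atBot (𝓝 1)) (hhlim : Tendsto h atBot (𝓝 1)) :
    ∃ c, (fun t ↦ u t - 1 + c * exp (lam * t)) =O[atBot] (fun t ↦ exp (4 * t)) ∧
      (fun t ↦ h t - 1 - 2 * c * exp (lam * t)) =O[atBot] fun t ↦ exp (4 * t) := by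
  have hlam4 : lam < 4 := by nlinarith
  have hlam2 : 4 < 2 * lam := by nlinarith
  have hforcing := forcing_isBigO_exp_add_sq (p := fun t ↦ 2 * (u t - 1) + (h t - 1))
    (q := fun t ↦ u t - h t) (β := 4) (hulim.isBigO_one ℝ)
  obtain ⟨hp, a, hq⟩ := exists_asymptotic_of_decoupled
    (P := fun t ↦ 2 * U t + H t) (Q := fun t ↦ U t - H t) (m := 2 * (k + 2)) hk (by positivity)
    hlam4 hlam2
    (by
      filter_upwards [hu, hh] with t hut hht
      exact ((hut.sub_const 1).const_mul 2).fun_add (hht.sub_const 1))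
    (by
      filter_upwards [hU, hH] with t hUt hHt
      exact ((hUt.const_mul 2).fun_add hHt).congr_deriv (by ring))
    (by
      filter_upwards [hu, hh] with t hut hht
      exact hut.fun_sub hht)
    (by
      filter_upwards [hU, hH] with t hUt hHt
      exact (hUt.fun_sub hHt).congr_deriv (by rw [hchar]; ring))
    (hforcing 2 (-(2 * (k + 2) / 3)) 0 (2 * (k + 2) / 3))
    (hforcing 1 0 (2 * (k + 2) / 3) (2 * (k + 2) / 3))
    (by simpa using ((hulim.sub_const 1).const_mul 2).add (hhlim.sub_const 1))
    (by simpa using hulim.sub hhlim)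
  refine ⟨-a / 3, ?_, ?_⟩
  · exact ((hp.add hq).const_mul_left (1 / 3)).congr_left fun t ↦ by ring
  · exact ((hp.sub (hq.const_mul_left 2)).const_mul_left (1 / 3)).congr_left fun t ↦ by ring

end LogVariables

section Radial

variable {y : ℝ → ℝ}

lemma hasDerivAt_comp_exp {t : ℝ} (hy : DifferentiableAt ℝ y (exp t)) :
    HasDerivAt (fun s ↦ y (exp s)) (exp t * deriv y (exp t)) t := by
  rw [mul_comm]
  exact hy.hasDerivAt.comp t (Real.hasDerivAt_exp t)

lemma hasDerivAt_exp_mul_deriv_comp_exp {t : ℝ} (hy : DifferentiableAt ℝ (deriv y) (exp t)) :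
    HasDerivAt (fun s ↦ exp s * deriv y (exp s))
      (exp t * deriv y (exp t) + exp t ^ 2 * deriv (deriv y) (exp t)) t :=
  ((Real.hasDerivAt_exp t).fun_mul (hasDerivAt_comp_exp hy)).congr_deriv (by ring)

lemma isBigO_nhdsGT_zero_iff_comp_exp {f g : ℝ → ℝ} :
    f =O[𝓝[>] 0] g ↔ (fun t ↦ f (exp t)) =O[atBot] fun t ↦ g (exp t) := by
  rw [← Real.map_exp_atBot, isBigO_map]
  rfl

theorem exists_asymptotic_of_radial_system {u h : ℝ → ℝ} {k lam : ℝ} (hk : 0 < k) (hlam : 0 < lam)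
    (hchar : lam * (lam + k) = 4 * (k + 2))
    (hu1 : ∀ᶠ r in 𝓝[>] 0, DifferentiableAt ℝ u r)
    (hu2 : ∀ᶠ r in 𝓝[>] 0, DifferentiableAt ℝ (deriv u) r)
    (hh1 : ∀ᶠ r in 𝓝[>] 0, DifferentiableAt ℝ h r)
    (hh2 : ∀ᶠ r in 𝓝[>] 0, DifferentiableAt ℝ (deriv h) r)
    (hequ : ∀ᶠ r in 𝓝[>] 0, deriv (deriv u) r + (k + 1) / r * deriv u r
      + 2 * (k + 2) / r ^ 2 * (u r * h r - u r) - r ^ 2 * u r = 0)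
    (heqh : ∀ᶠ r in 𝓝[>] 0, deriv (deriv h) r + (k + 1) / r * deriv h r
      + 2 * (k + 2) / r ^ 2 * (u r ^ 2 - h r) = 0)
    (hulim : Tendsto u (𝓝[>] 0) (𝓝 1)) (hhlim : Tendsto h (𝓝[>] 0) (𝓝 1)) :
    ∃ c, (fun r ↦ u r - 1 + c * r ^ lam) =O[𝓝[>] 0] (fun r ↦ r ^ 4) ∧
      (fun r ↦ h r - 1 - 2 * c * r ^ lam) =O[𝓝[>] 0] fun r ↦ r ^ 4 := by
  have hexp : Tendsto exp atBot (𝓝[>] 0) := Real.tendsto_exp_atBot_nhdsGT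
  have hexp4 (t : ℝ) : exp (4 * t) = exp t ^ 4 := by
    rw [← Real.exp_nat_mul, Nat.cast_ofNat]
  have hexplam (t : ℝ) : exp (lam * t) = exp t ^ lam := by rw [mul_comm, Real.exp_mul]
  simp only [isBigO_nhdsGT_zero_iff_comp_exp, ← hexplam, ← hexp4]
  refine exists_asymptotic_of_log_system hk hlam hchar
    ((hexp.eventually hu1).mono fun t ↦ hasDerivAt_comp_exp)
    ((hexp.eventually hh1).mono fun t ↦ hasDerivAt_comp_exp) ?_ ?_
    (hulim.comp hexp) (hhlim.comp hexp)
  · filter_upwards [hexp.eventually hu2, hexp.eventually hequ] with t hut heq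
    refine (hasDerivAt_exp_mul_deriv_comp_exp hut).congr_deriv ?_
    have hr := (exp_pos t).ne'
    rw [hexp4]
    field_simp at heq
    linear_combination heq
  · filter_upwards [hexp.eventually hh2, hexp.eventually heqh] with t hht heq
    refine (hasDerivAt_exp_mul_deriv_comp_exp hht).congr_deriv ?_
    have hr := (exp_pos t).ne'
    field_simp at heq
    linear_combination heq

lemma exists_bounds_of_isBigO_nhdsGT {f g w : ℝ → ℝ} {a : ℝ} (hw : ∀ r, 0 ≤ w r)
    (hf : f =O[𝓝[>] a] w) (hg : g =O[𝓝[>] a] w) :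
    ∃ C > 0, ∃ b > a, ∀ r, a < r → r < b → |f r| ≤ C * w r ∧ |g r| ≤ C * w r := by
  obtain ⟨C, hC, hbound⟩ := (hf.prod_left hg).exists_pos
  obtain ⟨b, hb, hsub⟩ := mem_nhdsGT_iff_exists_Ioo_subset.1 hbound.bound
  refine ⟨C, hC, b, hb, fun r har hrb ↦ max_le_iff.1 ?_⟩
  exact (hsub ⟨har, hrb⟩).trans_eq (by rw [Real.norm_of_nonneg (hw r)])

end Radial

theorem stmt2_general (d : ℝ) (hd : 6 < d) (lam : ℝ)
    (hlam : lam = (-d + 6 + √(d ^ 2 + 4 * d - 28)) / 2)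
    (r₀ : ℝ) (hr₀ : 0 < r₀) (ut ht : ℝ → ℝ)
    (hu1 : ∀ r ∈ Ioo 0 r₀, DifferentiableAt ℝ ut r)
    (hu2 : ∀ r ∈ Ioo 0 r₀, DifferentiableAt ℝ (deriv ut) r)
    (hh1 : ∀ r ∈ Ioo 0 r₀, DifferentiableAt ℝ ht r)
    (hh2 : ∀ r ∈ Ioo 0 r₀, DifferentiableAt ℝ (deriv ht) r)
    (hequ : ∀ r ∈ Ioo 0 r₀, deriv (deriv ut) r + (d - 5) / r * deriv ut r
      + 2 * (d - 4) / r ^ 2 * (ut r * ht r - ut r) - r ^ 2 * ut r = 0)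
    (heqh : ∀ r ∈ Ioo 0 r₀, deriv (deriv ht) r + (d - 5) / r * deriv ht r
      + 2 * (d - 4) / r ^ 2 * (ut r ^ 2 - ht r) = 0)
    (hulim : Tendsto ut (𝓝[>] 0) (𝓝 1)) (hhlim : Tendsto ht (𝓝[>] 0) (𝓝 1)) :
    ∃ c : ℝ, ∃ C > (0 : ℝ), ∃ r₁ > (0 : ℝ), ∀ r : ℝ, 0 < r → r < r₁ →
      |ut r - 1 + c * r ^ lam| ≤ C * r ^ 4 ∧ |ht r - 1 - 2 * c * r ^ lam| ≤ C * r ^ 4 := by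
  have hnear {s : ℝ → Prop} (hs : ∀ r ∈ Ioo 0 r₀, s r) : ∀ᶠ r in 𝓝[>] 0, s r :=
    eventually_of_mem (Ioo_mem_nhdsGT hr₀) hs
  have hsqrt : √(d ^ 2 + 4 * d - 28) ^ 2 = d ^ 2 + 4 * d - 28 := Real.sq_sqrt (by nlinarith)
  have hlam0 : 0 < lam := by
    have : d - 6 < √(d ^ 2 + 4 * d - 28) := Real.lt_sqrt_of_sq_lt (by nlinarith)
    linarith
  have hchar : lam * (lam + (d - 6)) = 4 * (d - 6 + 2) := by
    rw [hlam]
    linear_combination hsqrt / 4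
  have hd5 : d - 6 + 1 = d - 5 := by ring
  have hd4 : d - 6 + 2 = d - 4 := by ring
  obtain ⟨c, hu, hh⟩ := exists_asymptotic_of_radial_system (sub_pos.2 hd) hlam0 hchar
    (hnear hu1) (hnear hu2) (hnear hh1) (hnear hh2)
    (by simpa only [hd5, hd4] using hnear hequ)
    (by simpa only [hd5, hd4] using hnear heqh) hulim hhlim
  exact ⟨c, exists_bounds_of_isBigO_nhdsGT (fun r ↦ by positivity) hu hh⟩

/-- Asymptotic behaviour near `r = 0` of solutions of the factored-out singular
Schrödinger–Newton–Hooke system in supercritical dimension `d ≥ 7`. -/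
theorem stmt2 (d : ℕ) (hd : 7 ≤ d) (lam : ℝ)
    (hlam : lam = (-(d:ℝ) + 6 + Real.sqrt ((d:ℝ)^2 + 4*(d:ℝ) - 28)) / 2)
    (r₀ : ℝ) (hr₀ : 0 < r₀)
    (ut ht : ℝ → ℝ)
    -- `ut` is C² on (0, r₀)
    (hu1 : ∀ r ∈ Ioo (0:ℝ) r₀, DifferentiableAt ℝ ut r)
    (hu2 : ∀ r ∈ Ioo (0:ℝ) r₀, DifferentiableAt ℝ (deriv ut) r)
    (hu3 : ContinuousOn (deriv (deriv ut)) (Ioo 0 r₀))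
    -- `ht` is C² on (0, r₀)
    (hh1 : ∀ r ∈ Ioo (0:ℝ) r₀, DifferentiableAt ℝ ht r)
    (hh2 : ∀ r ∈ Ioo (0:ℝ) r₀, DifferentiableAt ℝ (deriv ht) r)
    (hh3 : ContinuousOn (deriv (deriv ht)) (Ioo 0 r₀))
    -- the system of equations on (0, r₀)
    (hequ : ∀ r ∈ Ioo (0:ℝ) r₀,
      deriv (deriv ut) r + ((d:ℝ) - 5) / r * deriv ut r
        + 2 * ((d:ℝ) - 4) / r^2 * (ut r * ht r - ut r) - r^2 * ut r = 0)
    (heqh : ∀ r ∈ Ioo (0:ℝ) r₀,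
      deriv (deriv ht) r + ((d:ℝ) - 5) / r * deriv ht r
        + 2 * ((d:ℝ) - 4) / r^2 * ((ut r)^2 - ht r) = 0)
    -- boundary behaviour at 0⁺
    (hulim : Tendsto ut (nhdsWithin 0 (Ioi 0)) (nhds 1))
    (hhlim : Tendsto ht (nhdsWithin 0 (Ioi 0)) (nhds 1)) :
    ∃ c : ℝ, ∃ C > (0:ℝ), ∃ r₁ > (0:ℝ), ∀ r : ℝ, 0 < r → r < r₁ →
      |ut r - 1 + c * r ^ lam| ≤ C * r ^ 4 ∧
      |ht r - 1 - 2 * c * r ^ lam| ≤ C * r ^ 4 :=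
  stmt2_general d (by exact_mod_cast hd) lam hlam r₀ hr₀ ut ht hu1 hu2 hh1 hh2 hequ heqh hulim hhlim
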